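/- Let R = R₀ ⊕ R₁ be a finite-dimensional complex solvable Lie superalgebra with nilradical N = N₀ ⊕ N₁ such that R² ⊆ N. Then the odd part of R is contained in N, i.e. R₁ = N₁; equivalently, any graded complementary subspace Q = Q₀ ⊕ Q₁ to N in R has Q₁ = {0}. -/

import Mathlib

/-!
Let `x` be an odd element. Since `R² ⊆ N`, the graded subspace `A = N + ℂx` is an ideal, so by
maximality of `N` it suffices to show that `A` is nilpotent.

The super Jacobi identity gives `[[v, x], x] = ½ [v, [x, x]]`, that is `(ad x)² = ½ ad [x, x]`, and
`[x, x] ∈ R² ⊆ N` acts nilpotently because `N` is a nilpotent ideal; hence `(ad x)^m = 0` for some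
`m` (`exists_ad_pow_eq_zero`). The terms `N^k` of the descending central series of `N` are graded
ideals of `R` (`lcsIn_graded_ideal`), and on the quotient `N^k / N^{k+1}` the ideal `A` acts through
`ad x` alone, so bracketing `m` times with `A` maps `N^k` into `N^{k+1}`. As `[A, A] ⊆ N`, the
descending central series of `A` reaches zero.
-/

open Submodule Module

/-- A Lie superalgebra structure over `ℂ` on the module `L`: a ℤ₂-grading
`L = even ⊕ odd`, together with a grading-preserving bilinear bracket which is
super skew-symmetric and satisfies the super Jacobi identity on homogeneous
elements. -/
structure SuperAlg (L : Type) [AddCommGroup L] [Module ℂ L] : Type where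
  bracket : L →ₗ[ℂ] L →ₗ[ℂ] L
  even : Submodule ℂ L
  odd : Submodule ℂ L
  grading_sup : even ⊔ odd = ⊤
  grading_inf : even ⊓ odd = ⊥
  bk_ee : ∀ x ∈ even, ∀ y ∈ even, bracket x y ∈ even
  bk_eo : ∀ x ∈ even, ∀ y ∈ odd, bracket x y ∈ odd
  bk_oe : ∀ x ∈ odd, ∀ y ∈ even, bracket x y ∈ odd
  bk_oo : ∀ x ∈ odd, ∀ y ∈ odd, bracket x y ∈ even
  skew_e : ∀ x y : L, (x ∈ even ∨ y ∈ even) → bracket x y = - bracket y x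
  skew_oo : ∀ x ∈ odd, ∀ y ∈ odd, bracket x y = bracket y x
  jacobi : ∀ (dx dy dz : Bool) (x y z : L),
      x ∈ (if dx then odd else even) → y ∈ (if dy then odd else even) →
      z ∈ (if dz then odd else even) →
      (if dx && dz then (-1 : ℂ) else 1) • bracket x (bracket y z) +
      (if dx && dy then (-1 : ℂ) else 1) • bracket y (bracket z x) +
      (if dy && dz then (-1 : ℂ) else 1) • bracket z (bracket x y) = 0

namespace SuperAlg

variable {L : Type} [AddCommGroup L] [Module ℂ L] (S : SuperAlg L)

/-- The subspace `[A, B]` spanned by brackets of elements of `A` and `B`. -/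
def bk (A B : Submodule ℂ L) : Submodule ℂ L := Submodule.map₂ S.bracket A B

/-- The descending central series of a subalgebra `A`:
`C¹(A) = A`, `C^{k+1}(A) = [C^k(A), A]`. -/
def lcsIn (A : Submodule ℂ L) : ℕ → Submodule ℂ L
  | 0 => A
  | k + 1 => S.bk (lcsIn A k) A

/-- The derived series of a subalgebra `A`:
`A^{[1]} = A`, `A^{[k+1]} = [A^{[k]}, A^{[k]}]`. -/
def dsIn (A : Submodule ℂ L) : ℕ → Submodule ℂ L
  | 0 => A
  | k + 1 => S.bk (dsIn A k) (dsIn A k)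

/-- The square `L² = [L, L]`. -/
def sq : Submodule ℂ L := S.bk ⊤ ⊤

/-- Nilpotency: the descending central series vanishes eventually. -/
def IsNilpotent : Prop := ∃ s, S.lcsIn ⊤ s = ⊥

/-- Solvability: the derived series vanishes eventually. -/
def IsSolvable : Prop := ∃ k, S.dsIn ⊤ k = ⊥

/-- `A` is an ideal. -/
def IsIdeal (A : Submodule ℂ L) : Prop := S.bk A ⊤ ≤ A

/-- `A` is a graded subspace. -/
def IsGraded (A : Submodule ℂ L) : Prop := (A ⊓ S.even) ⊔ (A ⊓ S.odd) = A

/-- `N` is the nilradical: the greatest nilpotent graded ideal. -/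
def IsNilradical (N : Submodule ℂ L) : Prop :=
  (S.IsGraded N ∧ S.IsIdeal N ∧ ∃ s, S.lcsIn N s = ⊥) ∧
  ∀ A : Submodule ℂ L, S.IsGraded A → S.IsIdeal A → (∃ s, S.lcsIn A s = ⊥) → A ≤ N

/-- `R` is the radical: the greatest solvable graded ideal. -/
def IsRadical (R : Submodule ℂ L) : Prop :=
  (S.IsGraded R ∧ S.IsIdeal R ∧ ∃ k, S.dsIn R k = ⊥) ∧
  ∀ A : Submodule ℂ L, S.IsGraded A → S.IsIdeal A → (∃ k, S.dsIn A k = ⊥) → A ≤ R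

/-- `d` is an even superderivation. -/
def IsEvenDer (d : L →ₗ[ℂ] L) : Prop :=
  (∀ x ∈ S.even, d x ∈ S.even) ∧ (∀ x ∈ S.odd, d x ∈ S.odd) ∧
  ∀ x y : L, d (S.bracket x y) = S.bracket (d x) y + S.bracket x (d y)

/-- `d` is an odd superderivation. -/
def IsOddDer (d : L →ₗ[ℂ] L) : Prop :=
  (∀ x ∈ S.even, d x ∈ S.odd) ∧ (∀ x ∈ S.odd, d x ∈ S.even) ∧
  (∀ x ∈ S.even, ∀ y : L, d (S.bracket x y) = S.bracket (d x) y + S.bracket x (d y)) ∧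
  (∀ x ∈ S.odd, ∀ y : L, d (S.bracket x y) = S.bracket (d x) y - S.bracket x (d y))

/-- The inner superderivation `ad a : y ↦ [y, a]`. -/
def ad (a : L) : L →ₗ[ℂ] L := S.bracket.flip a

/-- An endomorphism is diagonalizable if its eigenspaces span. -/
def IsDiagonalizable (f : Module.End ℂ L) : Prop :=
  (⨆ μ : ℂ, Module.End.eigenspace f μ) = ⊤

/-- A torus on `S`: a commutative subalgebra of the even superderivations
consisting of diagonalizable endomorphisms. -/
def IsTorus (T : Submodule ℂ (L →ₗ[ℂ] L)) : Prop :=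
  (∀ d ∈ T, S.IsEvenDer d) ∧
  (∀ d ∈ T, ∀ d' ∈ T, d ∘ₗ d' = d' ∘ₗ d) ∧
  (∀ d ∈ T, IsDiagonalizable d)

/-- A maximal torus. -/
def IsMaxTorus (T : Submodule ℂ (L →ₗ[ℂ] L)) : Prop :=
  S.IsTorus T ∧ ∀ T' : Submodule ℂ (L →ₗ[ℂ] L), S.IsTorus T' → T ≤ T' → T' = T

/-- A nilpotent Lie superalgebra is of maximal rank if a maximal torus has
dimension `dim (L / L²)`. -/
def IsMaxRank : Prop :=
  ∃ T : Submodule ℂ (L →ₗ[ℂ] L), S.IsMaxTorus T ∧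
    Module.finrank ℂ ↥T = Module.finrank ℂ (L ⧸ S.sq)

/-- `ι : N → L` is an embedding of Lie superalgebras (injective, bracket- and
grading-preserving). -/
def IsEmbedding {N : Type} [AddCommGroup N] [Module ℂ N]
    (SN : SuperAlg N) (ι : N →ₗ[ℂ] L) : Prop :=
  Function.Injective ι ∧
  (∀ x y : N, ι (SN.bracket x y) = S.bracket (ι x) (ι y)) ∧
  SN.even.map ι = S.even ⊓ LinearMap.range ι ∧
  SN.odd.map ι = S.odd ⊓ LinearMap.range ι

/-- `S` (on `L`) is a maximal solvable extension of the nilpotent Lie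
superalgebra `SN` (on `N`, embedded via `ι` as the nilradical): `S` is solvable
with nilradical `ι(N)`, and among all such solvable extensions the codimension
of the nilradical is maximal. -/
def IsMaxSolvExt {N : Type} [AddCommGroup N] [Module ℂ N]
    (SN : SuperAlg N) (ι : N →ₗ[ℂ] L) : Prop :=
  S.IsSolvable ∧ S.IsEmbedding SN ι ∧ S.IsNilradical (LinearMap.range ι) ∧
  ∀ (L' : Type) [AddCommGroup L'] [Module ℂ L'] [FiniteDimensional ℂ L']
    (S' : SuperAlg L') (ι' : N →ₗ[ℂ] L'),
      S'.IsSolvable → S'.IsEmbedding SN ι' → S'.IsNilradical (LinearMap.range ι') →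
      Module.finrank ℂ (L' ⧸ LinearMap.range ι') ≤
        Module.finrank ℂ (L ⧸ LinearMap.range ι)

/-- `S` (on `L`) is isomorphic to the semidirect product `R_T = N ⊕ T` of the
nilpotent Lie superalgebra `SN` (embedded via `ι` as the nilradical) with a
torus `T` of `SN`, the bracket being given by `[x, d] = d x`, `[d, d'] = 0`:
there is an even complement `Q` to `ι(N)` with `[Q, Q] = 0` such that
restriction of the adjoint action to `N` is a linear isomorphism of `Q` onto
`T`. -/
def IsRT {N : Type} [AddCommGroup N] [Module ℂ N]
    (_SN : SuperAlg N) (ι : N →ₗ[ℂ] L) (T : Submodule ℂ (N →ₗ[ℂ] N)) : Prop :=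
  ∃ (Q : Submodule ℂ L) (f : ↥Q →ₗ[ℂ] (N →ₗ[ℂ] N)),
    Q ≤ S.even ∧ Q ⊓ LinearMap.range ι = ⊥ ∧ Q ⊔ LinearMap.range ι = ⊤ ∧
    S.bk Q Q = ⊥ ∧
    (∀ (z : ↥Q) (n : N), ι (f z n) = S.bracket (ι n) (z : L)) ∧
    Function.Injective f ∧
    LinearMap.range f = T

end SuperAlg

namespace SuperAlg

variable {L : Type} [AddCommGroup L] [Module ℂ L] (S : SuperAlg L)

/-- The homogeneous part of parity `d`: odd for `true`, even for `false`. -/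
def part (d : Bool) : Submodule ℂ L := if d then S.odd else S.even

lemma bracket_mem_part {a b : Bool} {x y : L} (hx : x ∈ S.part a) (hy : y ∈ S.part b) :
    S.bracket x y ∈ S.part (xor a b) := by
  cases a <;> cases b <;> simp only [part] at * <;> simp at *
  · exact S.bk_ee x hx y hy
  · exact S.bk_eo x hx y hy
  · exact S.bk_oe x hx y hy
  · exact S.bk_oo x hx y hy

/-- Super skew-symmetry, in the sign-free form sufficient for membership in subspaces. -/
lemma bracket_eq_or {a b : Bool} {x y : L} (hx : x ∈ S.part a) (hy : y ∈ S.part b) :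
    S.bracket x y = S.bracket y x ∨ S.bracket x y = - S.bracket y x := by
  cases a <;> cases b <;> simp only [part] at * <;> simp at *
  · exact Or.inr (S.skew_e x y (Or.inl hx))
  · exact Or.inr (S.skew_e x y (Or.inl hx))
  · exact Or.inr (S.skew_e x y (Or.inr hy))
  · exact Or.inl (S.skew_oo x hx y hy)

lemma bracket_mem_comm {a b : Bool} {x y : L} (hx : x ∈ S.part a) (hy : y ∈ S.part b)
    (P : Submodule ℂ L) (h : S.bracket x y ∈ P) : S.bracket y x ∈ P := by
  rcases S.bracket_eq_or hy hx with e | e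
  · rwa [e]
  · rw [e]; exact P.neg_mem h

lemma isGraded_top : S.IsGraded ⊤ := by
  simpa [IsGraded] using S.grading_sup

lemma le_of_hom {A P : Submodule ℂ L} (hA : S.IsGraded A)
    (h : ∀ d, ∀ x ∈ A, x ∈ S.part d → x ∈ P) : A ≤ P := by
  rw [← hA]
  refine sup_le ?_ ?_
  · exact fun x hx => h false x hx.1 (by simpa [part] using hx.2)
  · exact fun x hx => h true x hx.1 (by simpa [part] using hx.2)

lemma isGraded_of_le {A : Submodule ℂ L} (h : A ≤ (A ⊓ S.even) ⊔ (A ⊓ S.odd)) : S.IsGraded A :=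
  le_antisymm (sup_le inf_le_left inf_le_left) h

lemma hom_mem_sup {A : Submodule ℂ L} {d : Bool} {x : L} (hx : x ∈ A) (hd : x ∈ S.part d) :
    x ∈ (A ⊓ S.even) ⊔ (A ⊓ S.odd) := by
  cases d <;> simp [part] at hd
  · exact mem_sup_left ⟨hx, hd⟩
  · exact mem_sup_right ⟨hx, hd⟩

lemma bracket_mem_bk {A B : Submodule ℂ L} {x y : L} (hx : x ∈ A) (hy : y ∈ B) :
    S.bracket x y ∈ S.bk A B := Submodule.apply_mem_map₂ _ hx hy

lemma bk_mono {A B A' B' : Submodule ℂ L} (h : A ≤ A') (h' : B ≤ B') :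
    S.bk A B ≤ S.bk A' B' := Submodule.map₂_le_map₂ h h'

lemma bk_le_of_hom {A B P : Submodule ℂ L} (hA : S.IsGraded A) (hB : S.IsGraded B)
    (h : ∀ a b, ∀ x ∈ A, x ∈ S.part a → ∀ y ∈ B, y ∈ S.part b → S.bracket x y ∈ P) :
    S.bk A B ≤ P := by
  refine Submodule.map₂_le.2 fun x hx y hy => ?_
  have h1 : A ≤ P.comap (S.bracket.flip y) := by
    refine S.le_of_hom hA fun a x hx hxa => ?_
    have h2 : B ≤ P.comap (S.bracket x) := S.le_of_hom hB fun b y hy hyb => h a b x hx hxa y hy hyb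
    exact h2 hy
  exact h1 hx

lemma isGraded_bk {A B : Submodule ℂ L} (hA : S.IsGraded A) (hB : S.IsGraded B) :
    S.IsGraded (S.bk A B) :=
  S.isGraded_of_le <| S.bk_le_of_hom hA hB fun _ _ _ hx hxa _ hy hyb =>
    S.hom_mem_sup (S.bracket_mem_bk hx hy) (S.bracket_mem_part hxa hyb)

lemma bracket_mem_of_isIdeal {A : Submodule ℂ L} (hA : S.IsIdeal A) {x : L} (hx : x ∈ A) (z : L) :
    S.bracket x z ∈ A := hA (S.bracket_mem_bk hx mem_top)

lemma isIdeal_bk {A B : Submodule ℂ L} (hA : S.IsGraded A) (hB : S.IsGraded B)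
    (hA' : S.IsIdeal A) (hB' : S.IsIdeal B) : S.IsIdeal (S.bk A B) := by
  refine Submodule.map₂_le.2 fun c hc z _ => ?_
  have key : (⊤ : Submodule ℂ L) ≤ (S.bk A B).comap (S.bracket c) := by
    refine S.le_of_hom S.isGraded_top fun d z _ hz => ?_
    have h1 : S.bk A B ≤ (S.bk A B).comap (S.bracket.flip z) := by
      refine S.bk_le_of_hom hA hB fun a b x hx hxa y hy hyb => ?_
      change S.bracket (S.bracket x y) z ∈ S.bk A B
      refine S.bracket_mem_comm hz (S.bracket_mem_part hxa hyb) _ ?_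
      have t1 : S.bracket x (S.bracket y z) ∈ S.bk A B :=
        S.bracket_mem_bk hx (S.bracket_mem_of_isIdeal hB' hy z)
      have hzx : S.bracket z x ∈ A :=
        S.bracket_mem_comm hxa hz _ (S.bracket_mem_of_isIdeal hA' hx z)
      have t2 : S.bracket y (S.bracket z x) ∈ S.bk A B :=
        S.bracket_mem_comm (S.bracket_mem_part hz hxa) hyb _ (S.bracket_mem_bk hzx hy)
      have hJ := S.jacobi a b d x y z hxa hyb hz
      have t3 := eq_neg_of_add_eq_zero_right hJ
      have t4 : (if b && d then (-1 : ℂ) else 1) • S.bracket z (S.bracket x y) ∈ S.bk A B := by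
        rw [t3]
        exact neg_mem (add_mem (smul_mem _ _ t1) (smul_mem _ _ t2))
      refine (Submodule.smul_mem_iff _ ?_).1 t4
      split_ifs <;> norm_num
    exact h1 hc
  exact key mem_top

lemma lcsIn_graded_ideal {N : Submodule ℂ L} (hN : S.IsGraded N) (hN' : S.IsIdeal N) (k : ℕ) :
    S.IsGraded (S.lcsIn N k) ∧ S.IsIdeal (S.lcsIn N k) := by
  induction k with
  | zero => exact ⟨hN, hN'⟩
  | succ k ih => exact ⟨S.isGraded_bk ih.1 hN, S.isIdeal_bk ih.1 hN ih.2 hN'⟩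

/-- For odd `x`, `(ad x)² = ½ ad [x, x]`. -/
lemma two_smul_ad_ad {x : L} (hx : x ∈ S.odd) (v : L) :
    (2 : ℂ) • S.bracket (S.bracket v x) x = S.bracket v (S.bracket x x) := by
  have key : (⊤ : Submodule ℂ L) ≤
      LinearMap.eqLocus ((2 : ℂ) • (S.ad x ∘ₗ S.ad x)) (S.ad (S.bracket x x)) := by
    refine S.le_of_hom S.isGraded_top fun d v _ hv => ?_
    change (2 : ℂ) • S.bracket (S.bracket v x) x = S.bracket v (S.bracket x x)
    have hJ := S.jacobi d true true v x x hv hx hx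
    cases d <;> simp [part] at hv hJ
    · rw [S.skew_e x v (Or.inr hv), map_neg,
        S.skew_oo x hx _ (S.bk_eo v hv x hx)] at hJ
      rw [two_smul, eq_comm, ← sub_eq_zero, ← hJ]
      abel
    · rw [S.skew_oo x hx v hv, S.skew_e x _ (Or.inr (S.bk_oo v hv x hx))] at hJ
      rw [two_smul, ← sub_eq_zero, ← hJ]
      abel
  exact key (mem_top : v ∈ ⊤)

lemma exists_ad_pow_eq_zero {N : Submodule ℂ L} (hnil : ∃ s, S.lcsIn N s = ⊥)
    (hsq : S.sq ≤ N) {x : L} (hx : x ∈ S.odd) : ∃ m, S.ad x ^ m = 0 := by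
  obtain ⟨s, hs⟩ := hnil
  have hy : S.bracket x x ∈ N := hsq (S.bracket_mem_bk mem_top mem_top)
  -- One application of `ad [x, x]` lands in `N`; every further one moves one step down the series.
  have h1 : ∀ k v, (S.ad (S.bracket x x) ^ (k + 1)) v ∈ S.lcsIn N k := by
    intro k
    induction k with
    | zero => exact fun v => hsq (by simpa [ad, sq] using S.bracket_mem_bk mem_top mem_top)
    | succ k ih =>
      intro v
      rw [pow_succ', Module.End.mul_apply]
      exact S.bracket_mem_bk (ih v) hy
  have h2 : S.ad (S.bracket x x) ^ (s + 1) = 0 := by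
    ext v
    simpa [hs] using h1 s v
  have h3 : S.ad (S.bracket x x) = (2 : ℂ) • S.ad x ^ 2 := by
    ext v
    rw [pow_two]
    exact (S.two_smul_ad_ad hx v).symm
  refine ⟨2 * (s + 1), ?_⟩
  rw [h3, smul_pow, ← pow_mul] at h2
  exact (smul_eq_zero.1 h2).resolve_left (by norm_num)

/-- Modulo `N^{k+1}`, the ideal `N + ℂx` acts on `N^k` through `ad x`, so that bracketing
with it takes `(ad x)^j N^k` into `(ad x)^{j+1} N^k`. -/
lemma bk_sup_span_le {N : Submodule ℂ L} (hN : S.IsGraded N) (hN' : S.IsIdeal N) (x : L)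
    (k j : ℕ) :
    S.bk (S.lcsIn N (k + 1) ⊔ (S.lcsIn N k).map (S.ad x ^ j)) (N ⊔ span ℂ {x}) ≤
      S.lcsIn N (k + 1) ⊔ (S.lcsIn N k).map (S.ad x ^ (j + 1)) := by
  have hstable : ∀ j, ∀ w ∈ S.lcsIn N k, (S.ad x ^ j) w ∈ S.lcsIn N k := by
    intro j
    induction j with
    | zero => simp
    | succ j ih =>
      intro w hw
      rw [pow_succ', Module.End.mul_apply]
      exact S.bracket_mem_of_isIdeal (S.lcsIn_graded_ideal hN hN' k).2 (ih w hw) x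
  refine Submodule.map₂_le.2 fun v hv a ha => ?_
  obtain ⟨p, hp, q, hq, rfl⟩ := mem_sup.1 hv
  obtain ⟨w, hw, rfl⟩ := hq
  obtain ⟨n, hn, b, hb, rfl⟩ := mem_sup.1 ha
  obtain ⟨c, rfl⟩ := mem_span_singleton.1 hb
  rw [map_add S.bracket, LinearMap.add_apply, map_add (S.bracket ((S.ad x ^ j) w))]
  refine add_mem (mem_sup_left ?_) (add_mem (mem_sup_left ?_) (mem_sup_right ?_))
  · exact S.bracket_mem_of_isIdeal (S.lcsIn_graded_ideal hN hN' (k + 1)).2 hp _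
  · exact S.bracket_mem_bk (hstable j w hw) hn
  · rw [map_smul]
    refine smul_mem _ _ ⟨w, hw, ?_⟩
    rw [pow_succ', Module.End.mul_apply]
    rfl

lemma lcsIn_sup_span_nilpotent {N : Submodule ℂ L} (hN : S.IsGraded N) (hN' : S.IsIdeal N)
    (hnil : ∃ s, S.lcsIn N s = ⊥) (hsq : S.sq ≤ N) {x : L} (hx : x ∈ S.odd) :
    ∃ s, S.lcsIn (N ⊔ span ℂ {x}) s = ⊥ := by
  obtain ⟨m, hm⟩ := S.exists_ad_pow_eq_zero hnil hsq hx
  obtain ⟨s, hs⟩ := hnil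
  have key : ∀ k, ∃ t, S.lcsIn (N ⊔ span ℂ {x}) t ≤ S.lcsIn N k := by
    intro k
    induction k with
    | zero => exact ⟨1, (S.bk_mono le_top le_top).trans hsq⟩
    | succ k ih =>
      obtain ⟨t, ht⟩ := ih
      have h : ∀ j, S.lcsIn (N ⊔ span ℂ {x}) (t + j) ≤
          S.lcsIn N (k + 1) ⊔ (S.lcsIn N k).map (S.ad x ^ j) := by
        intro j
        induction j with
        | zero =>
          refine ht.trans (le_trans ?_ le_sup_right)
          exact fun w hw => ⟨w, hw, by simp⟩
        | succ j ih => exact (S.bk_mono ih le_rfl).trans (S.bk_sup_span_le hN hN' x k j)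
      refine ⟨t + m, (h m).trans ?_⟩
      simp [hm]
  obtain ⟨t, ht⟩ := key s
  exact ⟨t, by rwa [hs, le_bot_iff] at ht⟩

end SuperAlg

/-- For a finite-dimensional complex solvable Lie superalgebra `R` with
nilradical `N` such that `R² ⊆ N`, the odd part of `R` is contained in `N`:
`R₁ = N₁` (equivalently any graded complement `Q = Q₀ ⊕ Q₁` to `N` has `Q₁ = 0`). -/
theorem odd_part_le_nilradical
    {L : Type} [AddCommGroup L] [Module ℂ L] [FiniteDimensional ℂ L] (S : SuperAlg L)
    (hsolv : S.IsSolvable)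
    (N : Submodule ℂ L) (hN : S.IsNilradical N)
    (hsq : S.sq ≤ N) :
    S.odd = N ⊓ S.odd := by
  obtain ⟨⟨hgr, hid, hnil⟩, hmax⟩ := hN
  refine (inf_eq_right.2 fun x hx => ?_).symm
  refine hmax (N ⊔ span ℂ {x}) ?_ ?_ (S.lcsIn_sup_span_nilpotent hgr hid hnil hsq hx)
    (mem_sup_right (mem_span_singleton_self x))
  · refine S.isGraded_of_le (sup_le ?_ ?_)
    · exact S.le_of_hom hgr fun d y hy hd => S.hom_mem_sup (mem_sup_left hy) hd
    · rw [span_singleton_le_iff_mem]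
      exact mem_sup_right ⟨mem_sup_right (mem_span_singleton_self x), hx⟩
  · exact ((S.bk_mono le_top le_rfl).trans hsq).trans le_sup_left
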